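/- Let q be a real number with 0 < q and q ≠ 1, let h₁, h₂, l₁, α₁, λ be real numbers and t₁, t₂ nonzero reals. Assume λ + α₁ = -N for some positive integer N (so (q^{λ+α₁};q)_n = 0 for all n > N and the series below is a finite sum), and assume q^{h₁-l₁+n} ≠ 1 and q^{h₂-l₁+n}·t₂/t₁ ≠ 1 for all integers 1 ≤ n ≤ N. Then the function g(x) = x^{λ} · Σ_{n=0}^{N} q^n · (q^{λ+α₁};q)_n / ((q^{h₁-l₁+1};q)_n (q^{h₂-l₁+1}·t₂/t₁;q)_n (q;q)_n) · (x/(q^{l₁-1/2}t₁);q)_n satisfies the variant of the confluent q-hypergeometric equation of type (1,2) for all x > 0. -/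

import Mathlib

/-- The finite q-shifted factorial `(a;q)_n = ∏_{i=0}^{n-1} (1 - a q^i)`. -/
noncomputable def qPoch (q a : ℝ) (n : ℕ) : ℝ :=
  ∏ i ∈ Finset.range n, (1 - a * q ^ i)

/-- The variant of the confluent q-hypergeometric equation of type (1,2) (for `x > 0`). -/
def confEq12 (q h₁ h₂ l₁ α₁ lam t₁ t₂ : ℝ) (g : ℝ → ℝ) : Prop :=
  ∀ x : ℝ, 0 < x →
    q ^ (h₁ + h₂ - l₁ - 2 * lam + 1/2) * t₂ * (q ^ (l₁ - 1/2) * t₁ - x) * g (q * x)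
    + (x - q ^ (h₁ + 1/2) * t₁) * (x - q ^ (h₂ + 1/2) * t₂) * g (x / q)
    - (q ^ α₁ * x ^ 2
        - q ^ (h₁ + h₂ - lam + 1/2) * (q ^ (-h₂) * t₁ + q ^ (-h₁) * t₂ + q ^ (-l₁) * t₂) * x
        + q ^ (h₁ + h₂ - lam) * (q + 1) * t₁ * t₂) * g x = 0

/-! Up to the factor `x ^ lam` and the dilation `x = q ^ (l₁ - 1/2) * t₁ * y`, the equation is the
difference equation of the big q-Laguerre polynomials `₃φ₂(q⁻ᴺ, 0, y; B, C; q, q)`. The operator of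
that equation sends `(y;q)_n` to `y ^ 2` times a combination of `(y;q)_n` and `(y;q)_{n-1}`, so when
it is applied to a partial sum of `₃φ₂(A, 0, y; B, C; q, q)` the series telescopes. What remains is
the contribution of the last term, which carries the factor `1 - A q ^ N` and vanishes for
`A = q⁻ᴺ`. -/

theorem qPoch_succ (q a : ℝ) (n : ℕ) : qPoch q a (n + 1) = qPoch q a n * (1 - a * q ^ n) :=
  Finset.prod_range_succ _ _

theorem qPoch_succ' (q a : ℝ) (n : ℕ) : qPoch q a (n + 1) = (1 - a) * qPoch q (q * a) n := by
  unfold qPoch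
  rw [Finset.prod_range_succ', mul_comm, pow_zero, mul_one]
  congr 1
  exact Finset.prod_congr rfl fun i _ => by ring

theorem one_sub_mul_qPoch_mul_sub (q y : ℝ) (n : ℕ) :
    (1 - y) * (qPoch q (q * y) n - qPoch q y n) = y * (1 - q ^ n) * qPoch q y n := by
  rw [mul_sub, ← qPoch_succ', qPoch_succ]
  ring

theorem qPoch_div_succ_sub {q : ℝ} (hq : q ≠ 0) (y : ℝ) (n : ℕ) :
    qPoch q (y / q) (n + 1) - qPoch q y (n + 1) = -(y / q * (1 - q ^ (n + 1)) * qPoch q y n) := by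
  rw [qPoch_succ' q (y / q), mul_div_cancel₀ y hq, qPoch_succ]
  field_simp
  ring

/-- The q-difference operator `D` of the big q-Laguerre polynomials with parameters `B / q` and
`C / q`: the polynomial of degree `N` solves `D f y = (q⁻ᴺ - 1) * y ^ 2 * f y`. -/
noncomputable def bigQLaguerreOp (q B C : ℝ) (f : ℝ → ℝ) (y : ℝ) : ℝ :=
  B * C / q * (1 - y) * (f (q * y) - f y) + (y - B) * (y - C) * (f (y / q) - f y)

theorem bigQLaguerreOp_sum {ι : Type*} (q B C : ℝ) (s : Finset ι) (c : ι → ℝ) (f : ι → ℝ → ℝ)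
    (y : ℝ) :
    bigQLaguerreOp q B C (fun z => ∑ i ∈ s, c i * f i z) y =
      ∑ i ∈ s, c i * bigQLaguerreOp q B C (f i) y := by
  simp only [bigQLaguerreOp, ← Finset.sum_sub_distrib, Finset.mul_sum, ← Finset.sum_add_distrib]
  exact Finset.sum_congr rfl fun i _ => by ring

theorem bigQLaguerreOp_qPoch_zero (q B C y : ℝ) :
    bigQLaguerreOp q B C (fun z => qPoch q z 0) y = 0 := by
  simp [bigQLaguerreOp, qPoch]

theorem bigQLaguerreOp_qPoch_succ {q : ℝ} (hq : q ≠ 0) (B C y : ℝ) (n : ℕ) :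
    bigQLaguerreOp q B C (fun z => qPoch q z (n + 1)) y =
      y ^ 2 * ((1 - q ^ (n + 1)) / q ^ (n + 1)) *
        (qPoch q y (n + 1) - (1 - B * q ^ n) * (1 - C * q ^ n) * qPoch q y n) := by
  rw [bigQLaguerreOp, mul_assoc (B * C / q), one_sub_mul_qPoch_mul_sub, qPoch_div_succ_sub hq,
    qPoch_succ]
  field_simp
  ring

theorem bigQLaguerreOp_sum_qPoch {q A B C : ℝ} (hq : q ≠ 0) {c : ℕ → ℝ} {N : ℕ}
    (hc : ∀ n < N, c (n + 1) * ((1 - B * q ^ n) * (1 - C * q ^ n) * (1 - q ^ (n + 1))) =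
      c n * (q * (1 - A * q ^ n))) (y : ℝ) :
    bigQLaguerreOp q B C (fun z => ∑ n ∈ Finset.range (N + 1), c n * qPoch q z n) y =
      (A - 1) * y ^ 2 * ∑ n ∈ Finset.range (N + 1), c n * qPoch q y n +
        y ^ 2 * ((1 - A * q ^ N) / q ^ N * c N * qPoch q y N) := by
  rw [bigQLaguerreOp_sum q B C _ c fun n z => qPoch q z n]
  induction N with
  | zero =>
    simp only [zero_add, Finset.sum_range_one, bigQLaguerreOp_qPoch_zero, pow_zero]
    ring
  | succ N ih =>
    have telescope : c (N + 1) * bigQLaguerreOp q B C (fun z => qPoch q z (N + 1)) y =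
        (A - 1) * y ^ 2 * (c (N + 1) * qPoch q y (N + 1)) +
          y ^ 2 * ((1 - A * q ^ (N + 1)) / q ^ (N + 1) * c (N + 1) * qPoch q y (N + 1) -
            (1 - A * q ^ N) / q ^ N * c N * qPoch q y N) := by
      have hcN := hc N N.lt_succ_self
      rw [bigQLaguerreOp_qPoch_succ hq]
      field_simp
      linear_combination (-y ^ 2 * q ^ N * qPoch q y N) * hcN
    rw [Finset.sum_range_succ, ih fun n hn => hc n (hn.trans N.lt_succ_self), telescope,
      Finset.sum_range_succ _ (N + 1)]
    ring

/-- The coefficient of `(y;q)_n` in the basic hypergeometric series `₃φ₂(A, 0, y; B, C; q, q)`. -/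
noncomputable def phiCoeff (q A B C : ℝ) (n : ℕ) : ℝ :=
  q ^ n * qPoch q A n / (qPoch q B n * qPoch q C n * qPoch q q n)

/-- The basic hypergeometric series `₃φ₂(A, 0, y; B, C; q, q)` truncated after the term of index
`N`; for `A = q⁻ᴺ` it is the big q-Laguerre polynomial of degree `N`. -/
noncomputable def phiTrunc (q A B C : ℝ) (N : ℕ) (y : ℝ) : ℝ :=
  ∑ n ∈ Finset.range (N + 1), phiCoeff q A B C n * qPoch q y n

theorem phiCoeff_succ (q A B C : ℝ) (n : ℕ) :
    phiCoeff q A B C (n + 1) = phiCoeff q A B C n *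
      (q * (1 - A * q ^ n) / ((1 - B * q ^ n) * (1 - C * q ^ n) * (1 - q ^ (n + 1)))) := by
  simp only [phiCoeff, qPoch_succ, pow_succ' q n]
  rw [div_mul_div_comm]
  congr 1 <;> ring

theorem bigQLaguerreOp_phiTrunc {q A B C : ℝ} {N : ℕ} (hq : q ≠ 0)
    (hqn : ∀ n < N, q ^ (n + 1) ≠ 1) (hA : A * q ^ N = 1) (hB : ∀ n < N, B * q ^ n ≠ 1)
    (hC : ∀ n < N, C * q ^ n ≠ 1) (y : ℝ) :
    bigQLaguerreOp q B C (phiTrunc q A B C N) y = (A - 1) * y ^ 2 * phiTrunc q A B C N y := by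
  have hrec (n : ℕ) (hn : n < N) : phiCoeff q A B C (n + 1) *
      ((1 - B * q ^ n) * (1 - C * q ^ n) * (1 - q ^ (n + 1))) =
        phiCoeff q A B C n * (q * (1 - A * q ^ n)) := by
    rw [phiCoeff_succ, mul_assoc, div_mul_cancel₀]
    exact mul_ne_zero (mul_ne_zero (sub_ne_zero.2 (hB n hn).symm) (sub_ne_zero.2 (hC n hn).symm))
      (sub_ne_zero.2 (hqn n hn).symm)
  have h := bigQLaguerreOp_sum_qPoch hq hrec y
  rwa [hA, sub_self, zero_div, zero_mul, zero_mul, mul_zero, add_zero] at h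

theorem confEq12_lhs_eq_bigQLaguerreOp {q t₁ T B C : ℝ} (hq : 0 < q) (ht₁ : t₁ ≠ 0)
    (h₁ h₂ l₁ α₁ lam t₂ : ℝ) (hT : T = q ^ (l₁ - 1 / 2) * t₁) (hB : B = q ^ (h₁ - l₁ + 1))
    (hC : C = q ^ (h₂ - l₁ + 1) * t₂ / t₁) (f : ℝ → ℝ) (y : ℝ) :
    q ^ (h₁ + h₂ - l₁ - 2 * lam + 1 / 2) * t₂ * (T - T * y) * (q ^ lam * f (q * y))
      + (T * y - q ^ (h₁ + 1 / 2) * t₁) * (T * y - q ^ (h₂ + 1 / 2) * t₂) * (f (y / q) / q ^ lam)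
      - (q ^ α₁ * (T * y) ^ 2
          - q ^ (h₁ + h₂ - lam + 1 / 2) * (q ^ (-h₂) * t₁ + q ^ (-h₁) * t₂ + q ^ (-l₁) * t₂)
            * (T * y)
          + q ^ (h₁ + h₂ - lam) * (q + 1) * t₁ * t₂) * f y =
      T ^ 2 / q ^ lam *
        (bigQLaguerreOp q B C f y - (q ^ (lam + α₁) - 1) * y ^ 2 * f y) := by
  subst hT hB hC
  have hsqrt : (q ^ (1 / 2 : ℝ)) ^ 2 = q := by
    rw [← Real.rpow_mul_natCast hq.le, Nat.cast_ofNat, div_mul_cancel₀ _ two_ne_zero, Real.rpow_one]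
  -- Every exponent splits into `h₁, h₂, l₁, α₁, lam, 1 / 2`, which leaves a rational identity.
  simp only [bigQLaguerreOp, Real.rpow_add hq, Real.rpow_sub hq, Real.rpow_neg hq.le, Real.rpow_one,
    two_mul]
  field_simp
  rw [hsqrt]
  field_simp
  ring

theorem confEq12_rpow_mul_comp_div_iff {q h₁ h₂ l₁ α₁ lam t₁ t₂ T B C : ℝ} (hq : 0 < q)
    (ht₁ : t₁ ≠ 0) (hT : T = q ^ (l₁ - 1 / 2) * t₁) (hB : B = q ^ (h₁ - l₁ + 1))
    (hC : C = q ^ (h₂ - l₁ + 1) * t₂ / t₁) (f : ℝ → ℝ) :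
    confEq12 q h₁ h₂ l₁ α₁ lam t₁ t₂ (fun x => x ^ lam * f (x / T)) ↔
      ∀ x > 0, bigQLaguerreOp q B C f (x / T) = (q ^ (lam + α₁) - 1) * (x / T) ^ 2 * f (x / T) := by
  refine forall₂_congr fun x hx => ?_
  have hL : q ^ lam ≠ 0 := (Real.rpow_pos_of_pos hq lam).ne'
  have hX : x ^ lam ≠ 0 := (Real.rpow_pos_of_pos hx lam).ne'
  have hT0 : T ≠ 0 := hT ▸ mul_ne_zero (Real.rpow_pos_of_pos hq _).ne' ht₁
  have hlhs := confEq12_lhs_eq_bigQLaguerreOp hq ht₁ h₁ h₂ l₁ α₁ lam t₂ hT hB hC f (x / T)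
  rw [mul_div_cancel₀ x hT0, ← mul_div_assoc, div_right_comm] at hlhs
  have hc : x ^ lam * (T ^ 2 / q ^ lam) ≠ 0 := mul_ne_zero hX (div_ne_zero (pow_ne_zero 2 hT0) hL)
  rw [← sub_eq_zero (a := bigQLaguerreOp q B C f _),
    ← mul_eq_zero_iff_left (b := bigQLaguerreOp q B C f _ - _) hc, mul_assoc (x ^ lam), ← hlhs]
  simp only [Real.mul_rpow hq.le hx.le, Real.div_rpow hx.le hq.le, ← hT]
  ring_nf

theorem stmt3 (q h₁ h₂ l₁ α₁ lam t₁ t₂ : ℝ) (N : ℕ)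
    (hq : 0 < q) (hq1 : q ≠ 1) (ht₁ : t₁ ≠ 0) (ht₂ : t₂ ≠ 0)
    (hN : 0 < N) (hNlam : lam + α₁ = -(N : ℝ))
    (hden : ∀ n : ℕ, 1 ≤ n → n ≤ N →
      q ^ (h₁ - l₁ + (n : ℝ)) ≠ 1 ∧ q ^ (h₂ - l₁ + (n : ℝ)) * t₂ / t₁ ≠ 1) :
    confEq12 q h₁ h₂ l₁ α₁ lam t₁ t₂ (fun x =>
      x ^ lam * ∑ n ∈ Finset.range (N + 1),
        q ^ n * qPoch q (q ^ (lam + α₁)) n /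
            (qPoch q (q ^ (h₁ - l₁ + 1)) n * qPoch q (q ^ (h₂ - l₁ + 1) * t₂ / t₁) n *
              qPoch q q n) *
          qPoch q (x / (q ^ (l₁ - 1/2) * t₁)) n) := by
  have hqn (n : ℕ) : q ^ (n + 1) ≠ 1 := fun h =>
    hq1 ((pow_eq_one_iff_of_nonneg hq.le n.succ_ne_zero).1 h)
  have hA : q ^ (lam + α₁) * q ^ N = 1 := by
    rw [hNlam, Real.rpow_neg hq.le, Real.rpow_natCast]
    exact inv_mul_cancel₀ (pow_ne_zero N hq.ne')
  have hshift (a : ℝ) (n : ℕ) : q ^ (a + ((n + 1 : ℕ) : ℝ)) = q ^ (a + 1) * q ^ n := by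
    rw [← Real.rpow_add_natCast hq.ne', Nat.cast_succ, add_assoc, add_comm (n : ℝ)]
  have hB (n : ℕ) (hn : n < N) : q ^ (h₁ - l₁ + 1) * q ^ n ≠ 1 :=
    hshift (h₁ - l₁) n ▸ (hden (n + 1) n.succ_pos hn).1
  have hC (n : ℕ) (hn : n < N) : q ^ (h₂ - l₁ + 1) * t₂ / t₁ * q ^ n ≠ 1 := by
    rw [div_mul_eq_mul_div, mul_right_comm, ← hshift]
    exact (hden (n + 1) n.succ_pos hn).2
  exact (confEq12_rpow_mul_comp_div_iff hq ht₁ rfl rfl rfl (phiTrunc q _ _ _ N)).2 fun x _ =>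
    bigQLaguerreOp_phiTrunc hq.ne' (fun n _ => hqn n) hA hB hC _
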